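/- Suppose for a bounded domain Ω ⊆ ℂ³ and boundary point q there exist constants C₁, C₂ > 0 and for each small δ > 0 a point p_δ ∈ Ω with |p_δ − q| ≤ δ such that: K_Ω(p_δ, ζ₁), K_Ω(p_δ, ζ₂) ≤ C₁ δ^{−1/(4k+1)} and K_Ω(p_δ, (ζ₁+ζ₂)/√2) ≥ C₂ δ^{−1/(4k)} for fixed linearly independent unit vectors ζ₁, ζ₂. Then s_Ω(p_δ) ≤ C₃ δ^{1/(4k(4k+1))} for a constant C₃, and in particular the squeezing function s_Ω has no uniform positive lower bound near q. -/

import Mathlib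

open Metric Set

noncomputable def kobayashi {E : Type*} [NormedAddCommGroup E] [NormedSpace ℂ E]
    (Ω : Set E) (p ζ : E) : ℝ :=
  sInf {α : ℝ | 0 < α ∧ ∃ φ : ℂ → E, DifferentiableOn ℂ φ (Metric.ball 0 1) ∧
    (∀ τ ∈ Metric.ball (0 : ℂ) 1, φ τ ∈ Ω) ∧ φ 0 = p ∧ α • deriv φ 0 = ζ}

noncomputable def indicatrix {E : Type*} [NormedAddCommGroup E] [NormedSpace ℂ E]
    (Ω : Set E) (p : E) : Set E :=
  {ζ | kobayashi Ω p ζ < 1}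

noncomputable def squeezing {E : Type*} [NormedAddCommGroup E] [NormedSpace ℂ E]
    (Ω : Set E) (p : E) : ℝ :=
  sSup {r : ℝ | 0 < r ∧ ∃ f : E → E, DifferentiableOn ℂ f Ω ∧ Set.InjOn f Ω ∧
    f p = 0 ∧ f '' Ω ⊆ Metric.ball 0 1 ∧ Metric.ball 0 r ⊆ f '' Ω}

section Holomorphic

variable {E F : Type*} [NormedAddCommGroup E] [NormedSpace ℂ E] [FiniteDimensional ℂ E]
  [NormedAddCommGroup F] [NormedSpace ℂ F] [FiniteDimensional ℂ F]

/-- A directional derivative of a holomorphic map between finite-dimensional spaces is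
holomorphic. -/
theorem DifferentiableOn.fderiv_apply_of_isOpen {U : Set E} {f : E → F} (hU : IsOpen U)
    (hf : DifferentiableOn ℂ f U) (v : E) :
    DifferentiableOn ℂ (fun z ↦ fderiv ℂ f z v) U := by
  intro a ha
  have : CompleteSpace F := FiniteDimensional.complete ℂ F
  have : ProperSpace (E →L[ℂ] F) := FiniteDimensional.proper ℂ _
  obtain ⟨R, hR, hball⟩ : ∃ R > 0, ball a R ⊆ U ∩ f ⁻¹' ball (f a) 1 := by
    refine Metric.mem_nhds_iff.1 (Filter.inter_mem (hU.mem_nhds ha) ?_)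
    exact (hf.differentiableAt (hU.mem_nhds ha)).continuousAt (ball_mem_nhds _ one_pos)
  have hbound : ∀ z ∈ ball a (R / 2), ‖fderiv ℂ f z‖ ≤ 2 / (R / 2) := by
    intro z hz
    have hsub : ball z (R / 2) ⊆ ball a R :=
      ball_subset_ball' (by rw [mem_ball] at hz; linarith)
    refine Complex.norm_fderiv_le_div_of_mapsTo_ball
      (hf.mono fun x hx ↦ (hball (hsub hx)).1) (fun x hx ↦ ?_) (half_pos hR)
    have h1 := (hball (hsub hx)).2
    have h2 := (hball (hsub (mem_ball_self (half_pos hR)))).2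
    rw [mem_preimage, mem_ball] at h1 h2
    rw [mem_closedBall]
    linarith [dist_triangle_right (f x) (f z) (f a)]
  obtain ⟨ρ, hρ, hρv⟩ : ∃ ρ > 0, ρ * ‖v‖ < R / 4 := by
    refine ⟨R / 4 / (‖v‖ + 1), by positivity, ?_⟩
    rw [div_mul_eq_mul_div, div_lt_iff₀ (by positivity)]
    nlinarith [norm_nonneg v]
  have hmem : ∀ z ∈ ball a (R / 4), ∀ t : ℂ, ‖t‖ ≤ ρ → z + t • v ∈ ball a (R / 2) := by
    intro z hz t ht
    rw [mem_ball, dist_eq_norm] at hz ⊢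
    calc ‖z + t • v - a‖ = ‖(z - a) + t • v‖ := by congr 1; abel
      _ ≤ ‖z - a‖ + ‖t‖ * ‖v‖ := by rw [← norm_smul]; exact norm_add_le _ _
      _ ≤ ‖z - a‖ + ρ * ‖v‖ := by gcongr
      _ < R / 2 := by linarith
  have hsubU : ball a (R / 2) ⊆ U := fun x hx ↦
    (hball (ball_subset_ball (by linarith) hx)).1
  let κ : ℝ → ℂ := fun θ ↦ _root_.deriv (circleMap 0 ρ) θ * ((circleMap 0 ρ θ - 0) ^ 2)⁻¹
  have hκ : Continuous κ := by
    have h0 : ∀ θ, (circleMap 0 ρ θ - 0) ^ 2 ≠ 0 := fun θ ↦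
      pow_ne_zero _ (by simp [circleMap, hρ.ne'])
    have : Continuous fun θ ↦ _root_.deriv (circleMap 0 ρ) θ := by
      simp only [deriv_circleMap]; fun_prop
    exact this.mul (((by fun_prop : Continuous fun θ ↦ (circleMap 0 ρ θ - 0) ^ 2)).inv₀ h0)
  have hnorm : ∀ θ : ℝ, ‖circleMap 0 ρ θ‖ ≤ ρ := fun θ ↦ by simp [abs_of_pos hρ]
  have hcauchy : ∀ z ∈ ball a (R / 4), fderiv ℂ f z v = (2 * ↑Real.pi * Complex.I)⁻¹ •
      ∫ θ in (0 : ℝ)..2 * Real.pi, κ θ • f (z + circleMap 0 ρ θ • v) := by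
    intro z hz
    let V : Set ℂ := (fun t : ℂ ↦ z + t • v) ⁻¹' U
    have hV : IsOpen V := hU.preimage (by fun_prop)
    have hg : ∀ t ∈ V, HasDerivAt (fun t : ℂ ↦ f (z + t • v)) (fderiv ℂ f (z + t • v) v) t := by
      intro t ht
      have h1 : HasDerivAt (fun t : ℂ ↦ z + t • v) v t := by
        simpa using ((hasDerivAt_id t).smul_const v).const_add z
      exact ((hf.differentiableAt (hU.mem_nhds ht)).hasFDerivAt).comp_hasDerivAt t h1
    have h0 : closedBall (0 : ℂ) ρ ⊆ V := fun t ht ↦ hsubU (hmem z hz t (by simpa using ht))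
    have := Complex.cderiv_eq_deriv hV
      (fun t ht ↦ (hg t ht).differentiableAt.differentiableWithinAt) hρ h0
    rw [(hg 0 (h0 (mem_closedBall_self hρ.le))).deriv, zero_smul, add_zero] at this
    rw [← this]
    simp only [Complex.cderiv, circleIntegral, κ, smul_smul]
  have hmain : HasFDerivAt
      (fun z ↦ ∫ θ in (0 : ℝ)..2 * Real.pi, κ θ • f (z + circleMap 0 ρ θ • v))
      (∫ θ in (0 : ℝ)..2 * Real.pi, κ θ • fderiv ℂ f (a + circleMap 0 ρ θ • v)) a := by
    have hcont : ∀ z ∈ ball a (R / 4), Continuous fun θ ↦ κ θ • f (z + circleMap 0 ρ θ • v) := by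
      intro z hz
      refine hκ.smul ?_
      exact hf.continuousOn.comp_continuous (by fun_prop)
        fun θ ↦ hsubU (hmem z hz _ (hnorm θ))
    have ha' : a ∈ ball a (R / 4) := mem_ball_self (by linarith)
    refine intervalIntegral.hasFDerivAt_integral_of_dominated_of_fderiv_le
      (bound := fun θ ↦ ‖κ θ‖ * (2 / (R / 2)))
      (F' := fun z θ ↦ κ θ • fderiv ℂ f (z + circleMap 0 ρ θ • v))
      (ball_mem_nhds a (by linarith : 0 < R / 4)) ?_ ((hcont a ha').intervalIntegrable _ _)
      ?_ ?_ ?_ ?_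
    · filter_upwards [ball_mem_nhds a (by linarith : 0 < R / 4)] with z hz
      exact (hcont z hz).aestronglyMeasurable
    · borelize E
      borelize (E →L[ℂ] F)
      refine hκ.aestronglyMeasurable.smul ?_
      refine Measurable.aestronglyMeasurable ?_
      exact (measurable_fderiv ℂ f).comp (by fun_prop : Continuous fun θ : ℝ ↦
        a + circleMap 0 ρ θ • v).measurable
    · refine Filter.Eventually.of_forall fun θ _ z hz ↦ ?_
      rw [norm_smul]
      gcongr
      exact hbound _ (hmem z hz _ (hnorm θ))
    · exact (by fun_prop : Continuous fun θ ↦ ‖κ θ‖ * (2 / (R / 2))).intervalIntegrable _ _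
    · refine Filter.Eventually.of_forall fun θ _ z hz ↦ ?_
      have := (hf.differentiableAt (hU.mem_nhds (hsubU (hmem z hz _ (hnorm θ))))).hasFDerivAt
      exact ((hasFDerivAt_comp_add_right _).2 this).const_smul (κ θ)
  refine DifferentiableAt.differentiableWithinAt ?_
  refine DifferentiableAt.congr_of_eventuallyEq
    (hmain.differentiableAt.const_smul (2 * ↑Real.pi * Complex.I)⁻¹) ?_
  filter_upwards [ball_mem_nhds a (by linarith : 0 < R / 4)] with z hz using hcauchy z hz

theorem DifferentiableOn.contDiffOn_one_of_isOpen {U : Set E} {f : E → F} (hU : IsOpen U)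
    (hf : DifferentiableOn ℂ f U) : ContDiffOn ℂ 1 f U := by
  have h := contDiffOn_succ_iff_fderiv_of_isOpen (𝕜 := ℂ) (f := f) (n := 0) hU
  rw [zero_add] at h
  refine h.2 ⟨hf, by simp, ?_⟩
  rw [contDiffOn_zero, continuousOn_clm_apply]
  exact fun v ↦ (hf.fderiv_apply_of_isOpen hU v).continuousOn

end Holomorphic
section OneVariable

/-- An injective holomorphic function of one variable has nonvanishing derivative: its inverse is
holomorphic off the image of an isolated critical point, and continuous there. -/
theorem deriv_ne_zero_of_injOn {U : Set ℂ} {f : ℂ → ℂ} (hU : IsOpen U)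
    (hf : DifferentiableOn ℂ f U) (hinj : InjOn f U) {a : ℂ} (ha : a ∈ U) : deriv f a ≠ 0 := by
  have hana : AnalyticOnNhd ℂ f U := hf.analyticOnNhd hU
  have hnc : ∀ b ∈ U, ¬ ∀ᶠ z in nhds b, f z = f b := by
    intro b hb h
    have : ∀ᶠ z in nhds b, z = b := by
      filter_upwards [h, hU.mem_nhds hb] with z hz hzU using hinj hzU hb hz
    obtain ⟨z, hz, hzb⟩ := ((this.filter_mono nhdsWithin_le_nhds).and
      (self_mem_nhdsWithin : ({b}ᶜ : Set ℂ) ∈ nhdsWithin b {b}ᶜ)).exists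
    exact hzb hz
  have hopen : ∀ b ∈ U, nhds (f b) ≤ Filter.map f (nhds b) := fun b hb ↦
    (hana b hb).eventually_constant_or_nhds_le_map_nhds_aux.resolve_left (hnc b hb)
  let g := Function.invFunOn f U
  have hgf : ∀ b ∈ U, g (f b) = b := fun b hb ↦ hinj.leftInvOn_invFunOn hb
  have hgcont : ∀ b ∈ U, ContinuousAt g (f b) := by
    intro b hb
    rw [ContinuousAt, hgf b hb]
    refine (Filter.tendsto_map'_iff.2 ?_ : Filter.Tendsto g (Filter.map f (nhds b)) _).mono_left
      (hopen b hb)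
    refine Filter.tendsto_id.congr' ?_
    filter_upwards [hU.mem_nhds hb] with z hz using (hgf z hz).symm
  intro h0
  have hd : AnalyticAt ℂ (deriv f) a := (hana a ha).deriv
  have hiso : ∀ᶠ z in nhdsWithin a {a}ᶜ, deriv f z ≠ 0 := by
    refine hd.eventually_eq_zero_or_eventually_ne_zero.resolve_left fun h ↦ hnc a ha ?_
    obtain ⟨r, hr, hrb⟩ := Metric.mem_nhds_iff.1 (Filter.inter_mem (hU.mem_nhds ha) h)
    filter_upwards [ball_mem_nhds a hr] with z hz
    exact isOpen_ball.is_const_of_deriv_eq_zero (convex_ball a r).isPreconnected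
      (hf.mono fun x hx ↦ (hrb hx).1) (fun x hx ↦ (hrb hx).2) hz (mem_ball_self hr)
  rw [eventually_nhdsWithin_iff] at hiso
  have hS : f '' (U ∩ {z | z ∈ ({a}ᶜ : Set ℂ) → deriv f z ≠ 0}) ∈ nhds (f a) :=
    hopen a ha (Filter.mem_map.2 (Filter.mem_of_superset (Filter.inter_mem (hU.mem_nhds ha) hiso)
      (subset_preimage_image f _)))
  have hgd : DifferentiableOn ℂ g (f '' (U ∩ {z | z ∈ ({a}ᶜ : Set ℂ) → deriv f z ≠ 0})) := by
    refine (Complex.differentiableOn_compl_singleton_and_continuousAt_iff hS).1 ⟨?_, hgcont a ha⟩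
    rintro _ ⟨⟨z, ⟨hzU, hz⟩, rfl⟩, hne⟩
    have hza : z ≠ a := fun h ↦ hne (by rw [h]; rfl)
    refine DifferentiableAt.differentiableWithinAt ?_
    have h1 : HasDerivAt f (deriv f z) (g (f z)) := by
      rw [hgf z hzU]; exact (hf.differentiableAt (hU.mem_nhds hzU)).hasDerivAt
    refine (h1.of_local_left_inverse (hgcont z hzU) (hz hza) ?_).differentiableAt
    refine Filter.mem_of_superset (hopen z hzU
      (Filter.image_mem_map (hU.mem_nhds hzU))) ?_
    rintro _ ⟨x, hx, rfl⟩
    simp [hgf x hx]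
  have h1 := (hgd.differentiableAt hS).hasDerivAt.comp a
    (hf.differentiableAt (hU.mem_nhds ha)).hasDerivAt
  rw [h0, mul_zero] at h1
  have h2 : HasDerivAt id 0 a := by
    refine h1.congr_of_eventuallyEq ?_
    filter_upwards [hU.mem_nhds ha] with z hz using (hgf z hz).symm
  exact one_ne_zero ((hasDerivAt_id a).unique h2)

/-- Persistence of zeros of a continuous family of holomorphic functions. -/
theorem eventually_exists_zero_of_family {G : ℂ → ℂ → ℂ} {ρ : ℝ} (hρ : 0 < ρ)
    (hcont : ∀ t ∈ closedBall (0 : ℂ) ρ, ContinuousAt (fun x : ℂ × ℂ ↦ G x.1 x.2) (0, t))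
    (hdiff : ∀ᶠ s in nhds (0 : ℂ), DiffContOnCl ℂ (G s) (ball 0 ρ)) (h0 : G 0 0 = 0)
    (hne : ∀ t ∈ sphere (0 : ℂ) ρ, G 0 t ≠ 0) :
    ∀ᶠ s in nhds (0 : ℂ), ∃ t ∈ closedBall (0 : ℂ) ρ, G s t = 0 := by
  obtain ⟨t₀, ht₀, hmin⟩ := (isCompact_sphere (0 : ℂ) ρ).exists_isMinOn
    (NormedSpace.sphere_nonempty.2 hρ.le) (f := fun t ↦ ‖G 0 t‖) (by
      intro t ht
      refine ContinuousAt.continuousWithinAt ?_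
      refine ContinuousAt.norm ?_
      exact (hcont t (sphere_subset_closedBall ht)).comp
        (f := fun t : ℂ ↦ ((0 : ℂ), t)) (by fun_prop))
  set μ := ‖G 0 t₀‖
  have hμpos : 0 < μ := norm_pos_iff.2 (hne t₀ ht₀)
  have h1 : ∀ᶠ s in nhds (0 : ℂ), ∀ t ∈ sphere (0 : ℂ) ρ, μ / 2 < ‖G s t‖ := by
    refine (isCompact_sphere (0 : ℂ) ρ).eventually_forall_of_forall_eventually fun t ht ↦ ?_
    refine (hcont t (sphere_subset_closedBall ht)).norm.eventually (lt_mem_nhds ?_)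
    have : μ ≤ ‖G 0 t‖ := hmin ht
    simp only
    linarith
  have h2 : ∀ᶠ s in nhds (0 : ℂ), ‖G s 0‖ < μ / 2 := by
    have : ContinuousAt (fun s ↦ ‖G s 0‖) 0 :=
      ((hcont 0 (mem_closedBall_self hρ.le)).comp (f := fun s : ℂ ↦ (s, (0 : ℂ)))
        (by fun_prop)).norm
    refine this.eventually (gt_mem_nhds ?_)
    simpa [h0] using hμpos
  filter_upwards [hdiff, h1, h2] with s hs h1 h2
  by_contra! hz
  have hclosure : closure (ball (0 : ℂ) ρ) = closedBall 0 ρ := closure_ball _ hρ.ne'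
  have hinv : DiffContOnCl ℂ (fun t ↦ (G s t)⁻¹) (ball 0 ρ) :=
    hs.inv fun t ht ↦ hz t (hclosure ▸ ht)
  have := Complex.norm_le_of_forall_mem_frontier_norm_le isBounded_ball hinv (C := (μ / 2)⁻¹)
    (fun t ht ↦ by
      rw [frontier_ball _ hρ.ne'] at ht
      rw [norm_inv]
      exact inv_anti₀ (by positivity) (h1 t ht).le)
    (z := 0) (by rw [hclosure]; exact mem_closedBall_self hρ.le)
  rw [norm_inv, inv_le_inv₀ (norm_pos_iff.2 (hz 0 (mem_closedBall_self hρ.le)))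
    (by positivity)] at this
  linarith

end OneVariable

section ZeroSets

variable {E : Type*} [NormedAddCommGroup E] [NormedSpace ℂ E]

/-- Iterated derivative of `J` in the fixed direction `v`. -/
noncomputable def iteratedDirDeriv (J : E → ℂ) (v : E) (j : ℕ) : E → ℂ :=
  (fun H z ↦ fderiv ℂ H z v)^[j] J

theorem iteratedDirDeriv_succ (J : E → ℂ) (v : E) (j : ℕ) (z : E) :
    iteratedDirDeriv J v (j + 1) z = fderiv ℂ (iteratedDirDeriv J v j) z v := by
  simp only [iteratedDirDeriv, Function.iterate_succ_apply']

theorem hasDerivAt_comp_line {F : Type*} [NormedAddCommGroup F] [NormedSpace ℂ F] {U : Set E}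
    (hU : IsOpen U) {J : E → F} (hJ : DifferentiableOn ℂ J U) (z v : E) {t : ℂ}
    (ht : z + t • v ∈ U) :
    HasDerivAt (fun t : ℂ ↦ J (z + t • v)) (fderiv ℂ J (z + t • v) v) t := by
  have h1 : HasDerivAt (fun t : ℂ ↦ z + t • v) v t := by
    simpa using ((hasDerivAt_id t).smul_const v).const_add z
  exact ((hJ.differentiableAt (hU.mem_nhds ht)).hasFDerivAt).comp_hasDerivAt t h1

theorem analyticAt_comp_line {U : Set E}
    (hU : IsOpen U) {J : E → ℂ} (hJ : DifferentiableOn ℂ J U) (z v : E) {t : ℂ}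
    (ht : z + t • v ∈ U) :
    AnalyticAt ℂ (fun t : ℂ ↦ J (z + t • v)) t := by
  have hV : IsOpen ((fun t : ℂ ↦ z + t • v) ⁻¹' U) := hU.preimage (by fun_prop)
  exact DifferentiableOn.analyticAt (s := (fun t : ℂ ↦ z + t • v) ⁻¹' U)
    (fun t ht ↦ (hasDerivAt_comp_line hU hJ z v ht).differentiableAt.differentiableWithinAt)
    (hV.mem_nhds ht)

/-- Zeros of a holomorphic function which are isolated along a line persist along nearby parallel
lines. -/
theorem eventually_exists_zero_on_parallel_line {U : Set E} (hU : IsOpen U) {J : E → ℂ}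
    (hJ : DifferentiableOn ℂ J U) {z : E} (hz : z ∈ U) (hJz : J z = 0) (u v : E)
    (hv : ¬ ∀ᶠ t in nhds (0 : ℂ), J (z + t • v) = 0) {ε : ℝ} (hε : 0 < ε) :
    ∀ᶠ s in nhds (0 : ℂ), ∃ t : ℂ, ‖t‖ < ε ∧ J (z + s • u + t • v) = 0 := by
  have hz0 : z + (0 : ℂ) • v ∈ U := by simpa using hz
  have hiso := (analyticAt_comp_line hU hJ z v hz0).eventually_eq_zero_or_eventually_ne_zero
    |>.resolve_left hv
  rw [eventually_nhdsWithin_iff] at hiso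
  have hV : IsOpen ((fun t : ℂ ↦ z + t • v) ⁻¹' U) := hU.preimage (by fun_prop)
  obtain ⟨r, hr, hrb⟩ := Metric.mem_nhds_iff.1 (Filter.inter_mem (hV.mem_nhds hz0) hiso)
  obtain ⟨ρ, hρ, hρ'⟩ := exists_between (lt_min hε hr)
  have hsub : closedBall (0 : ℂ) ρ ⊆ ball 0 r :=
    closedBall_subset_ball (hρ'.trans_le (min_le_right _ _))
  have hUρ : ∀ᶠ s in nhds (0 : ℂ), ∀ t ∈ closedBall (0 : ℂ) ρ, z + s • u + t • v ∈ U := by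
    refine (isCompact_closedBall (0 : ℂ) ρ).eventually_forall_of_forall_eventually fun t ht ↦ ?_
    have : Continuous fun x : ℂ × ℂ ↦ z + x.1 • u + x.2 • v := by fun_prop
    refine this.continuousAt.eventually (hU.mem_nhds ?_)
    simpa using (hrb (hsub ht)).1
  have key := eventually_exists_zero_of_family (G := fun s t ↦ J (z + s • u + t • v)) hρ ?_ ?_
    (by simpa using hJz) ?_
  · filter_upwards [key] with s ⟨t, ht, hst⟩
    exact ⟨t, (mem_closedBall_zero_iff.1 ht).trans_lt (hρ'.trans_le (min_le_left _ _)), hst⟩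
  · intro t ht
    have h1 : z + ((0 : ℂ), t).1 • u + ((0 : ℂ), t).2 • v ∈ U := by
      simpa using (hrb (hsub ht)).1
    exact ContinuousAt.comp (f := fun x : ℂ × ℂ ↦ z + x.1 • u + x.2 • v)
      (hJ.differentiableAt (hU.mem_nhds h1)).continuousAt (by fun_prop)
  · filter_upwards [hUρ] with s hs
    refine DifferentiableOn.diffContOnCl fun t ht ↦ ?_
    rw [closure_ball _ hρ.ne'] at ht
    exact (hasDerivAt_comp_line hU hJ _ v (hs t ht)).differentiableAt.differentiableWithinAt
  · intro t ht
    have := (hrb (hsub (sphere_subset_closedBall ht))).2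
    simp only [zero_smul, add_zero]
    refine this fun h ↦ ?_
    rw [mem_singleton_iff.1 h] at ht
    exact hρ.ne (by simpa using ht)

variable [FiniteDimensional ℂ E]

theorem differentiableOn_iteratedDirDeriv {U : Set E} (hU : IsOpen U) {J : E → ℂ}
    (hJ : DifferentiableOn ℂ J U) (v : E) (j : ℕ) :
    DifferentiableOn ℂ (iteratedDirDeriv J v j) U := by
  induction j with
  | zero => exact hJ
  | succ j ih => exact (ih.fderiv_apply_of_isOpen hU v).congr fun z _ ↦ iteratedDirDeriv_succ J v j z

theorem iteratedDeriv_comp_line {U : Set E} (hU : IsOpen U) {J : E → ℂ}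
    (hJ : DifferentiableOn ℂ J U) (z v : E) (j : ℕ) {t : ℂ} (ht : z + t • v ∈ U) :
    iteratedDeriv j (fun t : ℂ ↦ J (z + t • v)) t = iteratedDirDeriv J v j (z + t • v) := by
  have hV : IsOpen ((fun t : ℂ ↦ z + t • v) ⁻¹' U) := hU.preimage (by fun_prop)
  induction j generalizing t with
  | zero => simp [iteratedDirDeriv]
  | succ j ih =>
    rw [iteratedDeriv_succ, iteratedDirDeriv_succ]
    have : iteratedDeriv j (fun t : ℂ ↦ J (z + t • v)) =ᶠ[nhds t]
        fun t ↦ iteratedDirDeriv J v j (z + t • v) := by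
      filter_upwards [hV.mem_nhds ht] with x hx using ih hx
    rw [this.deriv_eq]
    exact (hasDerivAt_comp_line hU (differentiableOn_iteratedDirDeriv hU hJ v j) z v ht).deriv

/-- `J` vanishes on a neighbourhood of `z` in the line through `z` directed by `v` if and only if
all its derivatives in the direction `v` vanish at `z`. -/
theorem eventually_comp_line_eq_zero_iff {U : Set E} (hU : IsOpen U) {J : E → ℂ}
    (hJ : DifferentiableOn ℂ J U) {z : E} (hz : z ∈ U) (v : E) :
    (∀ᶠ t in nhds (0 : ℂ), J (z + t • v) = 0) ↔ ∀ j, iteratedDirDeriv J v j z = 0 := by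
  have hz0 : z + (0 : ℂ) • v ∈ U := by simpa using hz
  have hder : ∀ j, iteratedDeriv j (fun t : ℂ ↦ J (z + t • v)) 0 = iteratedDirDeriv J v j z := by
    intro j
    simpa using iteratedDeriv_comp_line hU hJ z v j hz0
  have hana := analyticAt_comp_line hU hJ z v hz0
  rw [← analyticOrderAt_eq_top]
  constructor
  · intro h j
    rw [← hder]
    exact (natCast_le_analyticOrderAt_iff_iteratedDeriv_eq_zero (n := j + 1) hana).1
      (by rw [h]; exact le_top) j j.lt_succ_self
  · intro h
    refine ENat.eq_top_iff_forall_ge.2 fun n ↦ ?_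
    exact (natCast_le_analyticOrderAt_iff_iteratedDeriv_eq_zero hana).2
      fun i _ ↦ (hder i).trans (h i)

/-- The zero set of a nontrivial holomorphic function contains, at a point of minimal vanishing
order, a Lipschitz graph over any complex line. -/
theorem exists_lipschitz_curve_of_zeros {U : Set E} (hU : IsOpen U) {J : E → ℂ}
    (hJ : DifferentiableOn ℂ J U) {a : E} (ha : a ∈ U) (hJa : J a = 0) (u v : E)
    (hv : ¬ ∀ᶠ t in nhds (0 : ℂ), J (a + t • v) = 0) :
    ∃ z : E, ∃ γ : ℂ → ℂ, ∃ K : ℝ, ∃ r > 0,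
      (∀ s ∈ ball (0 : ℂ) r, z + s • u + γ s • v ∈ U ∧ J (z + s • u + γ s • v) = 0) ∧
      ∀ s ∈ ball (0 : ℂ) r, ∀ s' ∈ ball (0 : ℂ) r, ‖γ s - γ s'‖ ≤ K * ‖s - s'‖ := by
  classical
  have hex : ∃ m, ∃ z ∈ U, J z = 0 ∧ iteratedDirDeriv J v m z ≠ 0 := by
    rw [eventually_comp_line_eq_zero_iff hU hJ ha] at hv
    push Not at hv
    obtain ⟨m, hm⟩ := hv
    exact ⟨m, a, ha, hJa, hm⟩
  obtain ⟨z, hz, hJz, hm⟩ := Nat.find_spec hex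
  obtain ⟨m, hm'⟩ : ∃ m, Nat.find hex = m + 1 := by
    refine Nat.exists_eq_succ_of_ne_zero fun h ↦ ?_
    rw [h] at hm
    exact hm hJz
  have hvz : ¬ ∀ᶠ t in nhds (0 : ℂ), J (z + t • v) = 0 := by
    rw [eventually_comp_line_eq_zero_iff hU hJ hz]
    exact fun h ↦ hm (h _)
  rw [hm', iteratedDirDeriv_succ] at hm
  set h := iteratedDirDeriv J v m
  have hzero : ∀ x ∈ U, J x = 0 → h x = 0 := by
    intro x hx hJx
    by_contra hne
    exact Nat.find_min hex (by rw [hm']; exact m.lt_succ_self) ⟨x, hx, hJx, hne⟩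
  have hstrict : HasStrictFDerivAt h (fderiv ℂ h z) z :=
    (((differentiableOn_iteratedDirDeriv hU hJ v m).contDiffOn_one_of_isOpen hU).contDiffAt
      (hU.mem_nhds hz)).hasStrictFDerivAt one_ne_zero
  set A := fderiv ℂ h z
  have hAv : 0 < ‖A v‖ := norm_pos_iff.2 hm
  have hvpos : 0 < ‖v‖ := norm_pos_iff.2 fun h0 ↦ hm (by rw [h0, map_zero])
  set c : ℝ := ‖A v‖ / (2 * ‖v‖) with hc
  have hcpos : 0 < c := by positivity
  have hcv : c * ‖v‖ = ‖A v‖ / 2 := by rw [hc]; field_simp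
  have hlin : ∀ᶠ p : E × E in nhds (z, z), ‖h p.1 - h p.2 - A (p.1 - p.2)‖ ≤ c * ‖p.1 - p.2‖ :=
    hstrict.isLittleO.def hcpos
  rw [nhds_prod_eq] at hlin
  obtain ⟨N, hN, hlin⟩ := (Filter.eventually_prod_self_iff
    (r := fun x y ↦ ‖h x - h y - A (x - y)‖ ≤ c * ‖x - y‖)).1 hlin
  have hcont : ContinuousAt (fun x : ℂ × ℂ ↦ z + x.1 • u + x.2 • v) (0, 0) := by fun_prop
  have hNU : ∀ᶠ x : ℂ × ℂ in nhds (0, 0), z + x.1 • u + x.2 • v ∈ N ∩ U :=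
    hcont.eventually (by simpa using Filter.inter_mem hN (hU.mem_nhds hz))
  obtain ⟨η, hη, hNU⟩ := Metric.eventually_nhds_iff_ball.1 hNU
  have hNU' : ∀ s t : ℂ, ‖s‖ < η → ‖t‖ < η → z + s • u + t • v ∈ N ∩ U := fun s t hs ht ↦
    hNU (s, t) (by
      rw [← ball_prod_same]
      simpa using ⟨hs, ht⟩)
  have hpers := eventually_exists_zero_on_parallel_line hU hJ hz hJz u v hvz hη
  obtain ⟨r, hr, hpers⟩ := Metric.eventually_nhds_iff_ball.1 hpers
  choose! γ hγ using hpers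
  have hmem : ∀ s ∈ ball (0 : ℂ) (min r η), z + s • u + γ s • v ∈ N ∩ U ∧
      J (z + s • u + γ s • v) = 0 := by
    intro s hs
    have h1 := hγ s (ball_subset_ball (min_le_left _ _) hs)
    refine ⟨hNU' s (γ s) ?_ h1.1, h1.2⟩
    simpa using (ball_subset_ball (min_le_right _ _) hs : s ∈ ball (0 : ℂ) η)
  refine ⟨z, γ, 2 * (‖A u‖ + c * ‖u‖) / ‖A v‖, min r η, lt_min hr hη,
    fun s hs ↦ ⟨(hmem s hs).1.2, (hmem s hs).2⟩, fun s hs s' hs' ↦ ?_⟩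
  have h1 := hlin _ (hmem s hs).1.1 _ (hmem s' hs').1.1
  simp only [hzero _ (hmem s hs).1.2 (hmem s hs).2, hzero _ (hmem s' hs').1.2 (hmem s' hs').2]
    at h1
  have h2 : z + s • u + γ s • v - (z + s' • u + γ s' • v) = (s - s') • u + (γ s - γ s') • v := by
    module
  rw [h2, sub_zero, zero_sub, norm_neg, map_add, map_smul, map_smul] at h1
  have h3 : ‖(γ s - γ s') • A v‖ - ‖(s - s') • A u‖ ≤ ‖(s - s') • A u + (γ s - γ s') • A v‖ := by
    rw [add_comm]; exact norm_sub_le_norm_add _ _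
  have h4 : ‖(s - s') • u + (γ s - γ s') • v‖ ≤ ‖s - s'‖ * ‖u‖ + ‖γ s - γ s'‖ * ‖v‖ := by
    rw [← norm_smul, ← norm_smul]; exact norm_add_le _ _
  rw [norm_smul, norm_smul] at h3
  have h5 : c * ‖(s - s') • u + (γ s - γ s') • v‖ ≤
      c * (‖s - s'‖ * ‖u‖) + ‖γ s - γ s'‖ * (‖A v‖ / 2) := by
    rw [← hcv]
    nlinarith
  rw [div_mul_eq_mul_div, le_div_iff₀ hAv]
  nlinarith

end ZeroSets

section Osgood

open Module

universe u₁ u₂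

/-- A map with vanishing derivative along a Lipschitz graph is constant along it. -/
theorem eq_of_fderiv_eq_zero_of_lipschitz {E F : Type*} [NormedAddCommGroup E] [NormedSpace ℂ E]
    [NormedAddCommGroup F] [NormedSpace ℂ F] {f : E → F} {c : ℂ → E} {K r : ℝ}
    (hlip : ∀ s ∈ ball (0 : ℂ) r, ∀ s' ∈ ball (0 : ℂ) r, ‖c s - c s'‖ ≤ K * ‖s - s'‖)
    (hf : ∀ s ∈ ball (0 : ℂ) r, HasFDerivAt f (0 : E →L[ℂ] F) (c s))
    {s s' : ℂ} (hs : s ∈ ball (0 : ℂ) r) (hs' : s' ∈ ball (0 : ℂ) r) : f (c s) = f (c s') := by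
  have hder : ∀ s ∈ ball (0 : ℂ) r, HasDerivAt (f ∘ c) 0 s := by
    intro s hs
    have hbig : (fun x ↦ c x - c s) =O[nhds s] fun x ↦ x - s := by
      refine Asymptotics.IsBigO.of_bound K ?_
      filter_upwards [isOpen_ball.mem_nhds hs] with x hx using hlip x hx s hs
    have hc : Filter.Tendsto c (nhds s) (nhds (c s)) := by
      have h0 : Filter.Tendsto (fun x ↦ x - s) (nhds s) (nhds 0) :=
        (by fun_prop : Continuous fun x ↦ x - s).tendsto' _ _ (sub_self s)
      simpa using (hbig.trans_tendsto h0).add_const (c s)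
    rw [hasDerivAt_iff_isLittleO]
    have := (hasFDerivAt_iff_isLittleO.1 (hf s hs)).comp_tendsto hc
    simpa using! this.trans_isBigO hbig
  exact isOpen_ball.is_const_of_deriv_eq_zero (convex_ball 0 r).isPreconnected
    (fun x hx ↦ (hder x hx).differentiableAt.differentiableWithinAt)
    (fun x hx ↦ (hder x hx).deriv) hs hs'

/-- Noninvertibility of the derivative of a holomorphic map between spaces of the same dimension
is the vanishing of a holomorphic function. -/
theorem exists_jacobian {E F : Type*} [NormedAddCommGroup E] [NormedSpace ℂ E]
    [FiniteDimensional ℂ E] [NormedAddCommGroup F] [NormedSpace ℂ F] [FiniteDimensional ℂ F]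
    (hEF : finrank ℂ E = finrank ℂ F) {U : Set E} (hU : IsOpen U) {f : E → F}
    (hf : DifferentiableOn ℂ f U) :
    ∃ J : E → ℂ, DifferentiableOn ℂ J U ∧
      ∀ z, J z = 0 ↔ ¬ Function.Injective (fderiv ℂ f z) := by
  let b := finBasis ℂ E
  let b' : Basis (Fin (finrank ℂ E)) ℂ F := (finBasis ℂ F).reindex (finCongr hEF.symm)
  refine ⟨fun z ↦ (LinearMap.toMatrix b b' (fderiv ℂ f z : E →ₗ[ℂ] F)).det, ?_, fun z ↦ ?_⟩
  · simp only [Matrix.det_apply, LinearMap.toMatrix_apply]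
    refine DifferentiableOn.fun_sum fun σ _ ↦ DifferentiableOn.const_smul ?_ _
    have hcoord : ∀ i, DifferentiableOn ℂ (fun z ↦ b'.repr (fderiv ℂ f z (b i)) (σ i)) U :=
      fun i ↦ (LinearMap.toContinuousLinearMap (b'.coord (σ i))).differentiable
        |>.comp_differentiableOn (hf.fderiv_apply_of_isOpen hU (b i))
    exact fun z hz ↦ (HasFDerivWithinAt.finsetProd fun i _ ↦
      (hcoord i z hz).hasFDerivWithinAt).differentiableWithinAt
  · let e : F ≃ₗ[ℂ] E := b'.equiv b (Equiv.refl _)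
    have h1 : (LinearMap.toMatrix b b' (fderiv ℂ f z : E →ₗ[ℂ] F)).det =
        LinearMap.det (e.toLinearMap ∘ₗ (fderiv ℂ f z : E →ₗ[ℂ] F)) := by
      rw [← LinearMap.det_toMatrix b]
      congr 1
      ext i j
      simp [LinearMap.toMatrix_apply, e, Basis.equiv]
    beta_reduce
    rw [h1, ← not_iff_not, not_not]
    have h2 : Function.Injective (fderiv ℂ f z) ↔
        Function.Injective (e.toLinearMap ∘ₗ (fderiv ℂ f z : E →ₗ[ℂ] F)) := by
      simp
    rw [h2, ← ne_eq, ← isUnit_iff_ne_zero, ← LinearMap.isUnit_iff_isUnit_det, Module.End.isUnit_iff]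
    exact ⟨fun h ↦ h.1, fun h ↦ ⟨h, LinearMap.injective_iff_surjective.1 h⟩⟩

/-- In dimension at least two, an injective holomorphic map whose derivative is at each point
either zero or injective has injective derivative. -/
theorem injective_fderiv_of_forall_eq_zero_or_injective {E F : Type*}
    [NormedAddCommGroup E] [NormedSpace ℂ E]
    [FiniteDimensional ℂ E] [NormedAddCommGroup F] [NormedSpace ℂ F] [FiniteDimensional ℂ F]
    (hEF : finrank ℂ E = finrank ℂ F) (hE : 1 < finrank ℂ E) {U : Set E} (hU : IsOpen U)
    {f : E → F} (hf : DifferentiableOn ℂ f U) (hinj : InjOn f U)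
    (hdich : ∀ z ∈ U, fderiv ℂ f z = 0 ∨ Function.Injective (fderiv ℂ f z))
    {a : E} (ha : a ∈ U) : Function.Injective (fderiv ℂ f a) := by
  obtain ⟨J, hJ, hJiff⟩ := exists_jacobian hEF hU hf
  by_contra hna
  have hder0 : ∀ z ∈ U, J z = 0 → HasFDerivAt f (0 : E →L[ℂ] F) z := by
    intro z hz hJz
    have := (hf.differentiableAt (hU.mem_nhds hz)).hasFDerivAt
    rwa [(hdich z hz).resolve_right ((hJiff z).1 hJz)] at this
  have hJa : J a = 0 := (hJiff a).2 hna
  have : Nontrivial E := nontrivial_of_finrank_pos (R := ℂ) (by omega)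
  obtain ⟨R, hR, hball⟩ := Metric.mem_nhds_iff.1 (hU.mem_nhds ha)
  obtain ⟨b, hb, hJb⟩ : ∃ b ∈ ball a R, J b ≠ 0 := by
    by_contra! h
    obtain ⟨w, hw⟩ := exists_ne (0 : E)
    let r := R / ‖w‖
    have hwpos : 0 < ‖w‖ := norm_pos_iff.2 hw
    have hr : 0 < r := by positivity
    have hmem : ∀ s ∈ ball (0 : ℂ) r, a + s • w ∈ ball a R := by
      intro s hs
      rw [mem_ball_zero_iff, lt_div_iff₀ hwpos] at hs
      simpa [norm_smul] using hs
    have hs : ((r / 2 : ℝ) : ℂ) ∈ ball (0 : ℂ) r := by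
      rw [mem_ball_zero_iff, Complex.norm_real, Real.norm_of_nonneg (by positivity)]
      linarith
    have heq := eq_of_fderiv_eq_zero_of_lipschitz (f := f) (c := fun s : ℂ ↦ a + s • w)
      (K := ‖w‖) (r := r) (fun s _ s' _ ↦ by
        rw [add_sub_add_left_eq_sub, ← sub_smul, norm_smul, mul_comm])
      (fun s hs ↦ hder0 _ (hball (hmem s hs)) (h _ (hmem s hs))) hs (mem_ball_self hr)
    have := hinj (hball (hmem _ hs)) (hball (hmem _ (mem_ball_self hr))) heq
    have hr2 : r / 2 ≠ 0 := by positivity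
    simp only [zero_smul, add_zero, add_eq_left, smul_eq_zero, hw, or_false,
      Complex.ofReal_eq_zero] at this
    exact hr2 this
  set v := b - a with hv
  have hv0 : v ≠ 0 := fun h ↦ hJb (by rw [sub_eq_zero.1 h]; exact hJa)
  have hline : ¬ ∀ᶠ t in nhds (0 : ℂ), J (a + t • v) = 0 := by
    intro h
    have hconv : Convex ℝ ((fun t : ℂ ↦ a + t • v) ⁻¹' ball a R) := by
      intro x hx y hy α β hα hβ hαβ
      have : a + (α • x + β • y) • v = α • (a + x • v) + β • (a + y • v) := by
        have h1 : a = (α + β) • a := by rw [hαβ, one_smul]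
        rw [add_smul, smul_assoc, smul_assoc, smul_add, smul_add]
        nth_rewrite 1 [h1]
        rw [add_smul]
        abel
      rw [mem_preimage, this]
      exact convex_ball a R hx hy hα hβ hαβ
    have := AnalyticOnNhd.eqOn_zero_of_preconnected_of_eventuallyEq_zero
      (f := fun t : ℂ ↦ J (a + t • v)) (fun t ht ↦ analyticAt_comp_line hU hJ a v (hball ht))
      hconv.isPreconnected (z₀ := 0) (show a + (0 : ℂ) • v ∈ ball a R by simpa using hR) h
      (show a + (1 : ℂ) • v ∈ ball a R by simpa [hv] using hb)
    exact hJb (by simpa [hv] using this)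
  obtain ⟨u, hu⟩ := exists_linearIndependent_pair_of_one_lt_finrank hE hv0
  obtain ⟨z, γ, K, r, hr, hmem, hlip⟩ := exists_lipschitz_curve_of_zeros hU hJ ha hJa u v hline
  have hs : ((r / 2 : ℝ) : ℂ) ∈ ball (0 : ℂ) r := by
    rw [mem_ball_zero_iff, Complex.norm_real, Real.norm_of_nonneg (by positivity)]
    linarith
  have heq := eq_of_fderiv_eq_zero_of_lipschitz (f := f)
    (c := fun s : ℂ ↦ z + s • u + γ s • v) (K := ‖u‖ + K * ‖v‖) (r := r)
    (fun s hs s' hs' ↦ by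
      have h1 : z + s • u + γ s • v - (z + s' • u + γ s' • v) =
        (s - s') • u + (γ s - γ s') • v := by module
      rw [h1]
      refine (norm_add_le _ _).trans ?_
      rw [norm_smul, norm_smul]
      nlinarith [hlip s hs s' hs', norm_nonneg v])
    (fun s hs ↦ hder0 _ (hmem s hs).1 (hmem s hs).2) hs (mem_ball_self hr)
  have hx := hinj (hmem _ hs).1 (hmem _ (mem_ball_self hr)).1 heq
  have hzero : (γ (r / 2 : ℝ) - γ 0) • v + ((r / 2 : ℝ) : ℂ) • u = 0 := by
    rw [zero_smul, add_zero, ← sub_eq_zero] at hx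
    rw [← hx]
    module
  have := (LinearIndependent.pair_iff.1 hu _ _ hzero).2
  have hr2 : r / 2 ≠ 0 := by positivity
  exact hr2 (by exact_mod_cast this)

/-- Injective holomorphic maps between spaces of dimension `n` have injective derivatives. -/
def OsgoodInDim (n : ℕ) : Prop :=
  ∀ (E : Type u₁) (F : Type u₂) [NormedAddCommGroup E] [NormedSpace ℂ E] [FiniteDimensional ℂ E]
    [NormedAddCommGroup F] [NormedSpace ℂ F] [FiniteDimensional ℂ F],
    finrank ℂ E = n → finrank ℂ F = n → ∀ (U : Set E) (f : E → F), IsOpen U →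
    DifferentiableOn ℂ f U → InjOn f U → ∀ a ∈ U, Function.Injective (fderiv ℂ f a)

/-- If the derivative of an injective holomorphic map does not vanish at a point, then restricting
the map to a smooth level hypersurface of one of its coordinates reduces the injectivity of the
derivative at that point to one dimension less. -/
theorem OsgoodInDim.injective_fderiv_of_ne_zero {n : ℕ} (hn : OsgoodInDim.{u₁, u₂} n)
    {E : Type u₁} {F : Type u₂} [NormedAddCommGroup E] [NormedSpace ℂ E] [FiniteDimensional ℂ E]
    [NormedAddCommGroup F] [NormedSpace ℂ F] [FiniteDimensional ℂ F]
    (hE : finrank ℂ E = n + 1) (hF : finrank ℂ F = n + 1) {U : Set E} (hU : IsOpen U) {f : E → F}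
    (hf : DifferentiableOn ℂ f U) (hinj : InjOn f U) {a : E} (ha : a ∈ U)
    (hne : fderiv ℂ f a ≠ 0) : Function.Injective (fderiv ℂ f a) := by
  set f' := fderiv ℂ f a
  have hfa : HasFDerivAt f f' a := (hf.differentiableAt (hU.mem_nhds ha)).hasFDerivAt
  obtain ⟨x, hx⟩ : ∃ x, f' x ≠ 0 := by
    by_contra! h
    exact hne (ContinuousLinearMap.ext h)
  obtain ⟨ℓ, hℓ⟩ := SeparatingDual.exists_ne_zero (R := ℂ) hx
  let g : E →L[ℂ] ℂ := ℓ.comp f'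
  let K : Submodule ℂ E := LinearMap.ker (g : E →ₗ[ℂ] ℂ)
  let N : Submodule ℂ F := LinearMap.ker (ℓ : F →ₗ[ℂ] ℂ)
  have hK : finrank ℂ K = n := by
    have hg : (g : E →ₗ[ℂ] ℂ) ≠ 0 := fun h ↦ hℓ (LinearMap.congr_fun h x)
    have := Module.Dual.finrank_ker_add_one_of_ne_zero hg
    exact Nat.succ_injective (this.trans hE)
  have hN : finrank ℂ N = n := by
    have hg : (ℓ : F →ₗ[ℂ] ℂ) ≠ 0 := fun h ↦ hℓ (LinearMap.congr_fun h (f' x))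
    have := Module.Dual.finrank_ker_add_one_of_ne_zero hg
    exact Nat.succ_injective (this.trans hF)
  obtain ⟨P, hP⟩ := Submodule.ClosedComplemented.of_finiteDimensional K
  obtain ⟨R, hR⟩ := Submodule.ClosedComplemented.of_finiteDimensional N
  have hTinj : Function.Injective (g.prod P) := by
    rw [injective_iff_map_eq_zero]
    intro y hy
    have hy1 : g y = 0 := congrArg Prod.fst hy
    have hy2 : P y = 0 := congrArg Prod.snd hy
    have := hP ⟨y, hy1⟩
    rw [hy2] at this
    exact (congrArg Subtype.val this).symm
  let T : E ≃L[ℂ] ℂ × K := (LinearEquiv.ofInjectiveOfFinrankEq (g.prod P : E →ₗ[ℂ] ℂ × K) hTinj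
    (by rw [Module.finrank_prod, hK, hE, Module.finrank_self, add_comm])).toContinuousLinearEquiv
  have hT : ∀ y, T y = (g y, P y) := fun _ ↦ rfl
  let Ψ : E → ℂ × K := fun y ↦ (ℓ (f y), P y)
  have hΨ : ContDiffAt ℂ 1 Ψ a :=
    (ℓ.contDiff.contDiffAt.comp a ((hf.contDiffOn_one_of_isOpen hU).contDiffAt
      (hU.mem_nhds ha))).prodMk P.contDiff.contDiffAt
  have hΨ' : HasFDerivAt Ψ (T : E →L[ℂ] ℂ × K) a :=
    (ℓ.hasFDerivAt.comp a hfa).prodMk P.hasFDerivAt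
  have hs : HasStrictFDerivAt Ψ (T : E →L[ℂ] ℂ × K) a := hΨ.hasStrictFDerivAt' hΨ' one_ne_zero
  let χ : ℂ × K → E := hs.localInverse
  have hχ : ContDiffAt ℂ 1 χ (Ψ a) := hΨ.to_localInverse hΨ' one_ne_zero
  have hχ' : HasFDerivAt χ (T.symm : ℂ × K →L[ℂ] E) (Ψ a) := hs.to_localInverse.hasFDerivAt
  have hχa : χ (Ψ a) = a := hs.localInverse_apply_image
  let ι : K → ℂ × K := fun y ↦ (ℓ (f a), y)
  have hι : ∀ y, HasFDerivAt ι (ContinuousLinearMap.inr ℂ ℂ K) y := fun y ↦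
    (hasFDerivAt_const _ _).prodMk (hasFDerivAt_id y)
  have hev : ∀ᶠ y in nhds (Ψ a), Ψ (χ y) = y ∧ DifferentiableAt ℂ χ y ∧ χ y ∈ U :=
    hs.eventually_right_inverse.and <| ((hχ.eventually (by simp)).mono
      fun y hy ↦ hy.differentiableAt one_ne_zero).and <|
      hs.localInverse_continuousAt.eventually_mem (hU.mem_nhds (show χ (Ψ a) ∈ U by rwa [hχa]))
  obtain ⟨V, hV, hVo, haV⟩ := _root_.eventually_nhds_iff.1 ((hι (P a)).continuousAt.eventually hev)
  let h : K → N := fun y ↦ R (f (χ (ι y)))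
  have hder : HasFDerivAt h (R.comp (f'.comp ((T.symm : ℂ × K →L[ℂ] E).comp
      (ContinuousLinearMap.inr ℂ ℂ K)))) (P a) := by
    refine R.hasFDerivAt.comp (P a) (HasFDerivAt.comp (P a) ?_ (HasFDerivAt.comp (P a) hχ' (hι _)))
    rw [show χ (ι (P a)) = a from hχa]
    exact hfa
  have hdiff : DifferentiableOn ℂ h V := fun y hy ↦
    (R.differentiableAt.comp y (((hf.differentiableAt (hU.mem_nhds (hV y hy).2.2)).comp y
      ((hV y hy).2.1.comp y (hι y).differentiableAt)))).differentiableWithinAt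
  have hhinj : InjOn h V := by
    intro y hy y' hy' hyy'
    have h1 : ∀ y ∈ V, ℓ (f (χ (ι y))) = ℓ (f a) := fun y hy ↦ congrArg Prod.fst (hV y hy).1
    have h2 : ∀ y ∈ V, P (χ (ι y)) = y := fun y hy ↦ congrArg Prod.snd (hV y hy).1
    have h3 : f (χ (ι y)) - f (χ (ι y')) ∈ N := by
      change ℓ _ = 0
      rw [map_sub, h1 y hy, h1 y' hy', sub_self]
    have h4 := hR ⟨_, h3⟩
    rw [map_sub, sub_eq_zero.2 hyy'] at h4
    have h5 := sub_eq_zero.1 (congrArg Subtype.val h4).symm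
    rw [← h2 y hy, ← h2 y' hy', hinj (hV y hy).2.2 (hV y' hy').2.2 h5]
  have hfin := hn K N hK hN V h hVo hdiff hhinj (P a) haV
  rw [hder.fderiv] at hfin
  rw [injective_iff_map_eq_zero]
  intro w hw
  have hwK : g w = 0 := by simp [g, hw]
  have hTw : T.symm (0, ⟨w, hwK⟩) = w := by
    rw [T.symm_apply_eq, hT, hwK, hP ⟨w, hwK⟩]
  have := (injective_iff_map_eq_zero _).1 hfin ⟨w, hwK⟩ (by simp [hTw, hw])
  exact congrArg Subtype.val this

theorem osgoodInDim_one : OsgoodInDim.{u₁, u₂} 1 := by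
  intro E F _ _ _ _ _ _ hE hF U f hU hf hinj a ha
  let e : ℂ ≃L[ℂ] E := ContinuousLinearEquiv.ofFinrankEq (by rw [hE, Module.finrank_self])
  let e' : F ≃L[ℂ] ℂ := ContinuousLinearEquiv.ofFinrankEq (by rw [hF, Module.finrank_self])
  have hdiff : DifferentiableOn ℂ (e' ∘ f ∘ e) (e ⁻¹' U) :=
    e'.differentiable.comp_differentiableOn (hf.comp e.differentiable.differentiableOn fun _ h ↦ h)
  have hne := deriv_ne_zero_of_injOn (hU.preimage e.continuous) hdiff
    (e'.injective.comp_injOn (hinj.comp e.injective.injOn fun _ h ↦ h)) (a := e.symm a)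
    (by simpa using ha)
  have hder : HasFDerivAt (e' ∘ f ∘ e)
      ((e' : F →L[ℂ] ℂ).comp ((fderiv ℂ f a).comp (e : ℂ →L[ℂ] E))) (e.symm a) := by
    refine e'.hasFDerivAt.comp _ (HasFDerivAt.comp _ ?_ e.hasFDerivAt)
    rw [e.apply_symm_apply]
    exact (hf.differentiableAt (hU.mem_nhds ha)).hasFDerivAt
  rw [hder.hasDerivAt.deriv] at hne
  have hne1 : fderiv ℂ f a (e 1) ≠ 0 := fun h ↦ hne (by simp [h])
  rw [injective_iff_map_eq_zero]
  intro w hw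
  have hw1 : w = e.symm w • e 1 := by rw [← map_smul, smul_eq_mul, mul_one, e.apply_symm_apply]
  rw [hw1, map_smul] at hw
  rw [hw1, (smul_eq_zero.1 hw).resolve_right hne1, zero_smul]

theorem osgoodInDim_succ (n : ℕ) : OsgoodInDim.{u₁, u₂} (n + 1) := by
  induction n with
  | zero => exact osgoodInDim_one
  | succ n ih =>
    intro E F _ _ _ _ _ _ hE hF U f hU hf hinj a ha
    refine injective_fderiv_of_forall_eq_zero_or_injective (hE.trans hF.symm) (by omega) hU hf hinj
      (fun z hz ↦ ?_) ha
    exact or_iff_not_imp_left.2 (ih.injective_fderiv_of_ne_zero hE hF hU hf hinj hz)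

/-- **Osgood's theorem**: an injective holomorphic map between complex vector spaces of the same
finite dimension has invertible derivative. -/
theorem injective_fderiv_of_injOn {E : Type u₁} {F : Type u₂}
    [NormedAddCommGroup E] [NormedSpace ℂ E] [FiniteDimensional ℂ E]
    [NormedAddCommGroup F] [NormedSpace ℂ F] [FiniteDimensional ℂ F]
    (hEF : finrank ℂ E = finrank ℂ F) {U : Set E} (hU : IsOpen U) {f : E → F}
    (hf : DifferentiableOn ℂ f U) (hinj : InjOn f U) {a : E} (ha : a ∈ U) :
    Function.Injective (fderiv ℂ f a) := by
  obtain hE | hE := Nat.eq_zero_or_eq_succ_pred (finrank ℂ E)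
  · have := finrank_zero_iff.1 hE
    exact Function.injective_of_subsingleton _
  · exact osgoodInDim_succ _ E F hE (hEF.symm.trans hE) U f hU hf hinj a ha

end Osgood

section Kobayashi

variable {E : Type*} [NormedAddCommGroup E] [NormedSpace ℂ E]

/-- A holomorphic map into a ball that is centred at `p` contracts the Kobayashi metric. -/
theorem norm_fderiv_le_kobayashi {F : Type*} [NormedAddCommGroup F] [NormedSpace ℂ F] {Ω : Set E}
    (hΩ : IsOpen Ω) {f : E → F} (hf : DifferentiableOn ℂ f Ω) {p : E} (hp : p ∈ Ω)
    (hmaps : MapsTo f Ω (ball (f p) 1)) (ζ : E) : ‖fderiv ℂ f p ζ‖ ≤ kobayashi Ω p ζ := by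
  refine le_csInf ?_ ?_
  · obtain ⟨ε, hε, hball⟩ := Metric.isOpen_iff.1 hΩ p hp
    let t : ℝ := ε / (‖ζ‖ + 1)
    have hpos : 0 < ‖ζ‖ + 1 := by positivity
    have ht : 0 < t := by positivity
    have hder : ∀ τ, HasDerivAt (fun τ : ℂ ↦ p + τ • t • ζ) (t • ζ) τ := fun τ ↦ by
      simpa using! ((hasDerivAt_id τ).smul_const (t • ζ)).const_add p
    refine ⟨t⁻¹, inv_pos.2 ht, fun τ ↦ p + τ • t • ζ, fun τ _ ↦
      (hder τ).differentiableAt.differentiableWithinAt, fun τ hτ ↦ hball ?_, by simp, ?_⟩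
    · rw [mem_ball_zero_iff] at hτ
      rw [mem_ball_iff_norm, add_sub_cancel_left, norm_smul, norm_smul,
        Real.norm_of_nonneg ht.le]
      calc ‖τ‖ * (t * ‖ζ‖) ≤ 1 * (t * ‖ζ‖) := by gcongr
        _ < t * (‖ζ‖ + 1) := by linarith
        _ = ε := div_mul_cancel₀ _ hpos.ne'
    · rw [(hder 0).deriv, inv_smul_smul₀ ht.ne']
  · rintro α ⟨hα, φ, hφ, hφΩ, hφ0, rfl⟩
    have h0 : (0 : ℂ) ∈ ball (0 : ℂ) 1 := mem_ball_self one_pos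
    have hφd : DifferentiableAt ℂ φ 0 := hφ.differentiableAt (isOpen_ball.mem_nhds h0)
    have hfd : DifferentiableAt ℂ f (φ 0) :=
      hf.differentiableAt (hΩ.mem_nhds (hφΩ 0 h0))
    have hS : ‖deriv (f ∘ φ) 0‖ ≤ 1 := by
      refine Complex.norm_deriv_le_one_of_mapsTo_ball (hf.comp hφ hφΩ) (fun τ hτ ↦ ?_) one_pos
      rw [Function.comp_apply, Function.comp_apply, hφ0]
      exact ball_subset_closedBall (hmaps (hφΩ τ hτ))
    rw [fderiv_comp_deriv 0 hfd hφd, hφ0] at hS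
    rw [← Complex.coe_smul, map_smul, norm_smul, Complex.norm_real, Real.norm_of_nonneg hα.le]
    exact mul_le_of_le_one_right hα.le hS

/-- An injective holomorphic map whose image contains a large ball bounds the Kobayashi metric
from above. -/
theorem kobayashi_le_norm_fderiv_div [FiniteDimensional ℂ E] {Ω : Set E} (hΩ : IsOpen Ω)
    {f : E → E} (hf : DifferentiableOn ℂ f Ω) (hinj : InjOn f Ω) {p : E} (hp : p ∈ Ω)
    (hfp : f p = 0) {r : ℝ} (hr : 0 < r) (hball : ball 0 r ⊆ f '' Ω) {ζ : E} (hζ : ζ ≠ 0) :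
    kobayashi Ω p ζ ≤ ‖fderiv ℂ f p ζ‖ / r := by
  have hLinj : ∀ x ∈ Ω, Function.Injective (fderiv ℂ f x) := fun x hx ↦
    injective_fderiv_of_injOn rfl hΩ hf hinj hx
  let g := Function.invFunOn f Ω
  have hgf : ∀ x ∈ Ω, g (f x) = x := fun x hx ↦ hinj.leftInvOn_invFunOn hx
  have hg : ∀ x ∈ Ω, ∃ g' : E →L[ℂ] E, HasFDerivAt g g' (f x) ∧
      ∀ v, g' (fderiv ℂ f x v) = v := by
    intro x hx
    let T : E ≃L[ℂ] E := (LinearEquiv.ofInjectiveEndo (fderiv ℂ f x : E →ₗ[ℂ] E)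
      (hLinj x hx)).toContinuousLinearEquiv
    have hT : (T : E →L[ℂ] E) = fderiv ℂ f x := rfl
    have hs : HasStrictFDerivAt f (T : E →L[ℂ] E) x := hT ▸
      ((hf.contDiffOn_one_of_isOpen hΩ).contDiffAt (hΩ.mem_nhds hx)).hasStrictFDerivAt one_ne_zero
    exact ⟨_, (hs.to_local_left_inverse (Filter.mem_of_superset (hΩ.mem_nhds hx) hgf)).hasFDerivAt,
      fun v ↦ T.symm_apply_apply v⟩
  set L := fderiv ℂ f p
  have hLζ : 0 < ‖L ζ‖ := norm_pos_iff.2 fun h ↦ hζ (hLinj p hp (h.trans (map_zero _).symm))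
  let t : ℝ := r / ‖L ζ‖
  have ht : 0 < t := by positivity
  have hline : ∀ τ : ℂ, HasDerivAt (fun τ : ℂ ↦ τ • t • L ζ) (t • L ζ) τ := fun τ ↦ by
    simpa using! (hasDerivAt_id τ).smul_const (t • L ζ)
  have hmem : ∀ τ ∈ ball (0 : ℂ) 1, τ • t • L ζ ∈ f '' Ω := by
    intro τ hτ
    refine hball ?_
    rw [mem_ball_zero_iff] at hτ ⊢
    rw [norm_smul, norm_smul, Real.norm_of_nonneg ht.le, div_mul_cancel₀ _ hLζ.ne']
    exact mul_lt_of_lt_one_left hr hτ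
  refine csInf_le ⟨0, fun α hα ↦ hα.1.le⟩ ⟨by positivity, fun τ ↦ g (τ • t • L ζ),
    fun τ hτ ↦ ?_, fun τ hτ ↦ Function.invFunOn_mem (hmem τ hτ), ?_, ?_⟩
  · obtain ⟨x, hx, hfx⟩ := hmem τ hτ
    obtain ⟨g', hg', -⟩ := hg x hx
    rw [hfx] at hg'
    exact (hg'.differentiableAt.comp τ (hline τ).differentiableAt).differentiableWithinAt
  · beta_reduce
    rw [zero_smul, ← hfp, hgf p hp]
  · obtain ⟨g', hg', hg'L⟩ := hg p hp
    rw [hfp, ← zero_smul ℂ (t • L ζ)] at hg'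
    have hder : HasDerivAt (fun τ : ℂ ↦ g (τ • t • L ζ)) (g' (t • L ζ)) 0 :=
      HasFDerivAt.comp_hasDerivAt (l := g) 0 hg' (hline 0)
    rw [hder.deriv, ← Complex.coe_smul t, map_smul, hg'L, Complex.coe_smul, smul_smul,
      div_mul_div_comm, mul_comm r, div_self (by positivity), one_smul]

/-- If two vectors are short and their normalized sum is long in the Kobayashi metric, then the
squeezing function is small. -/
theorem squeezing_le_of_kobayashi [FiniteDimensional ℂ E] {Ω : Set E} (hΩ : IsOpen Ω) {p : E}
    (hp : p ∈ Ω) {ζ₁ ζ₂ : E} {c : ℂ} (hc : ‖c‖ ≤ 1) (hne : c • (ζ₁ + ζ₂) ≠ 0) {A B : ℝ}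
    (hA : 0 ≤ A) (hB : 0 < B) (h₁ : kobayashi Ω p ζ₁ ≤ A) (h₂ : kobayashi Ω p ζ₂ ≤ A)
    (h₃ : B ≤ kobayashi Ω p (c • (ζ₁ + ζ₂))) : squeezing Ω p ≤ 2 * A / B := by
  refine Real.sSup_le ?_ (by positivity)
  rintro r ⟨hr, f, hf, hinj, hfp, hsub, hball⟩
  have hmaps : MapsTo f Ω (ball (f p) 1) := by
    rw [hfp]
    exact mapsTo_iff_image_subset.2 hsub
  have hL₁ := (norm_fderiv_le_kobayashi hΩ hf hp hmaps ζ₁).trans h₁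
  have hL₂ := (norm_fderiv_le_kobayashi hΩ hf hp hmaps ζ₂).trans h₂
  have hL₃ := h₃.trans (kobayashi_le_norm_fderiv_div hΩ hf hinj hp hfp hr hball hne)
  rw [le_div_iff₀ hr] at hL₃
  rw [le_div_iff₀ hB, mul_comm]
  calc B * r ≤ ‖fderiv ℂ f p (c • (ζ₁ + ζ₂))‖ := hL₃
    _ = ‖c‖ * ‖fderiv ℂ f p ζ₁ + fderiv ℂ f p ζ₂‖ := by rw [map_smul, map_add, norm_smul]
    _ ≤ 1 * (A + A) := by gcongr; exact norm_add_le_of_le hL₁ hL₂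
    _ = 2 * A := by ring

end Kobayashi

theorem no_uniform_lower_bound (k : ℕ) (hk : 1 ≤ k)
    (Ω : Set (EuclideanSpace ℂ (Fin 3))) (hopen : IsOpen Ω)
    (hbdd : Bornology.IsBounded Ω) (q : EuclideanSpace ℂ (Fin 3))
    (ζ₁ ζ₂ : EuclideanSpace ℂ (Fin 3)) (hu₁ : ‖ζ₁‖ = 1) (hu₂ : ‖ζ₂‖ = 1)
    (hind : LinearIndependent ℂ ![ζ₁, ζ₂])
    (C₁ C₂ : ℝ) (hC₁ : 0 < C₁) (hC₂ : 0 < C₂)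
    (δ₀ : ℝ) (hδ₀ : 0 < δ₀) (p : ℝ → EuclideanSpace ℂ (Fin 3))
    (hpΩ : ∀ δ ∈ Set.Ioo (0 : ℝ) δ₀, p δ ∈ Ω)
    (hpq : ∀ δ ∈ Set.Ioo (0 : ℝ) δ₀, ‖p δ - q‖ ≤ δ)
    (hK₁ : ∀ δ ∈ Set.Ioo (0 : ℝ) δ₀,
        kobayashi Ω (p δ) ζ₁ ≤ C₁ * δ ^ (-(1 : ℝ) / (4 * k + 1)))
    (hK₂ : ∀ δ ∈ Set.Ioo (0 : ℝ) δ₀,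
        kobayashi Ω (p δ) ζ₂ ≤ C₁ * δ ^ (-(1 : ℝ) / (4 * k + 1)))
    (hK₃ : ∀ δ ∈ Set.Ioo (0 : ℝ) δ₀,
        C₂ * δ ^ (-(1 : ℝ) / (4 * k)) ≤
          kobayashi Ω (p δ) (((Real.sqrt 2)⁻¹ : ℂ) • (ζ₁ + ζ₂))) :
    (∃ C₃ : ℝ, 0 < C₃ ∧ ∀ δ ∈ Set.Ioo (0 : ℝ) δ₀,
        squeezing Ω (p δ) ≤ C₃ * δ ^ ((1 : ℝ) / (4 * k * (4 * k + 1)))) ∧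
    ∀ c : ℝ, 0 < c → ∃ δ ∈ Set.Ioo (0 : ℝ) δ₀, squeezing Ω (p δ) < c := by
  have hne : ((Real.sqrt 2)⁻¹ : ℂ) • (ζ₁ + ζ₂) ≠ 0 := by
    intro h
    have h2 : (Real.sqrt 2 : ℂ)⁻¹ ≠ 0 := by simp
    have := LinearIndependent.pair_iff.1 hind 1 1
      (by simpa using (smul_eq_zero.1 h).resolve_left h2)
    exact one_ne_zero this.1
  have hc : ‖((Real.sqrt 2)⁻¹ : ℂ)‖ ≤ 1 := by
    rw [norm_inv, Complex.norm_real, Real.norm_of_nonneg (Real.sqrt_nonneg 2)]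
    exact inv_le_one_of_one_le₀ (Real.one_le_sqrt.2 one_le_two)
  have hk0 : (0 : ℝ) < k := by exact_mod_cast hk
  have hmain : ∀ δ ∈ Set.Ioo (0 : ℝ) δ₀,
      squeezing Ω (p δ) ≤ 2 * C₁ / C₂ * δ ^ ((1 : ℝ) / (4 * k * (4 * k + 1))) := by
    intro δ hδ
    have hpos := hδ.1
    refine (squeezing_le_of_kobayashi hopen (hpΩ δ hδ) hc hne (by positivity) (by positivity)
      (hK₁ δ hδ) (hK₂ δ hδ) (hK₃ δ hδ)).trans_eq ?_
    have hexp : (1 : ℝ) / (4 * k * (4 * k + 1)) = -(1 : ℝ) / (4 * k + 1) - -(1 : ℝ) / (4 * k) := by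
      field_simp
      ring
    rw [hexp, Real.rpow_sub hpos]
    field_simp
  refine ⟨⟨2 * C₁ / C₂, by positivity, hmain⟩, fun c hcpos ↦ ?_⟩
  have he : (0 : ℝ) < 1 / (4 * k * (4 * k + 1)) := by positivity
  have hlim : Filter.Tendsto
      (fun δ : ℝ ↦ 2 * C₁ / C₂ * δ ^ ((1 : ℝ) / (4 * k * (4 * k + 1))))
      (nhdsWithin 0 (Set.Ioi 0)) (nhds 0) := by
    have := ((Real.continuousAt_rpow_const 0 _ (Or.inr he.le)).tendsto.const_mul
      (2 * C₁ / C₂)).mono_left (nhdsWithin_le_nhds (s := Set.Ioi 0))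
    rwa [Real.zero_rpow he.ne', mul_zero] at this
  obtain ⟨δ, hδc, hδ⟩ := ((hlim.eventually_lt_const hcpos).and
    (Ioo_mem_nhdsGT hδ₀)).exists
  exact ⟨δ, hδ, (hmain δ hδ).trans_lt hδc⟩
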